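/- Let d be a pseudo symmetric design satisfying ∑_{s∈Q} p_s q_s′(x*) = 0 (where q_s′ is the derivative of q_s), ∑_{s∈Q} p_s = 1, and p_s = 0 for every s ∉ Q. Then for every λ0 ∈ ℝ and every exchangeable prior g, d is E_{g,λ0}-optimal. -/

import Mathlib

open Matrix MeasureTheory
open scoped Classical

noncomputable section

/-- A treatment sequence: assigns a treatment in `Fin t` to each period in `Fin p`. -/
abbrev TrtSeq (p t : ℕ) := Fin p → Fin t

/-- Treatment/period incidence matrix `T_s`. -/
def Tmat {p t : ℕ} (s : TrtSeq p t) : Matrix (Fin p) (Fin t) ℝ :=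
  Matrix.of fun k i => if s k = i then 1 else 0

/-- Carryover incidence matrix `F_s`: first row zero, row `k` records the treatment
in period `k-1`. -/
def Fmat {p t : ℕ} (s : TrtSeq p t) : Matrix (Fin p) (Fin t) ℝ :=
  Matrix.of fun k i =>
    if (k : ℕ) = 0 then 0
    else if s ⟨(k : ℕ) - 1, Nat.lt_of_le_of_lt (Nat.sub_le _ _) k.isLt⟩ = i then 1 else 0

/-- The all-ones `m × m` matrix `J_m`. -/
def Jmat (m : ℕ) : Matrix (Fin m) (Fin m) ℝ := Matrix.of fun _ _ => 1

/-- `B_t = I_t - J_t / t`. -/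
def Bmat (t : ℕ) : Matrix (Fin t) (Fin t) ℝ := 1 - ((t : ℝ))⁻¹ • Jmat t

/-- `B̃ = Σ⁻¹ - Σ⁻¹ J_p Σ⁻¹ / (1_p' Σ⁻¹ 1_p)`. -/
def Btil {p : ℕ} (S : Matrix (Fin p) (Fin p) ℝ) : Matrix (Fin p) (Fin p) ℝ :=
  S⁻¹ - (((fun _ => (1 : ℝ)) : Fin p → ℝ) ⬝ᵥ (S⁻¹ *ᵥ fun _ => (1 : ℝ)))⁻¹ •
    (S⁻¹ * Jmat p * S⁻¹)

/-- `G_1(s) = T_s`, `G_2(s) = F_s`. -/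
def Gmat {p t : ℕ} (i : Fin 2) (s : TrtSeq p t) : Matrix (Fin p) (Fin t) ℝ :=
  if i = 0 then Tmat s else Fmat s

/-- An approximate design: nonnegative weights summing to one. -/
def IsDesign {p t : ℕ} (w : TrtSeq p t → ℝ) : Prop :=
  (∀ s, 0 ≤ w s) ∧ ∑ s : TrtSeq p t, w s = 1

/-- `Ĉ_{sij} = B_t G_i(s)' B̃ G_j(s) B_t`. -/
def Chat {p t : ℕ} (S : Matrix (Fin p) (Fin p) ℝ) (s : TrtSeq p t) (i j : Fin 2) :
    Matrix (Fin t) (Fin t) ℝ :=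
  Bmat t * (Gmat i s)ᵀ * Btil S * Gmat j s * Bmat t

/-- `c_{sij} = tr Ĉ_{sij}`. -/
def cseq {p t : ℕ} (S : Matrix (Fin p) (Fin p) ℝ) (s : TrtSeq p t) (i j : Fin 2) : ℝ :=
  (Chat S s i j).trace

/-- `Ĉ_{dij} = n ∑_s p_s Ĉ_{sij}`. -/
def ChatD {p t : ℕ} (n : ℕ) (S : Matrix (Fin p) (Fin p) ℝ) (w : TrtSeq p t → ℝ)
    (i j : Fin 2) : Matrix (Fin t) (Fin t) ℝ :=
  (n : ℝ) • ∑ s : TrtSeq p t, w s • Chat S s i j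

/-- `C_{dij} = Ĉ_{dij} - n (∑_s p_s G_i(s) B_t)' B̃ (∑_s p_s G_j(s) B_t)`. -/
def CD {p t : ℕ} (n : ℕ) (S : Matrix (Fin p) (Fin p) ℝ) (w : TrtSeq p t → ℝ)
    (i j : Fin 2) : Matrix (Fin t) (Fin t) ℝ :=
  ChatD n S w i j -
    (n : ℝ) • ((∑ s : TrtSeq p t, w s • (Gmat i s * Bmat t))ᵀ * Btil S *
      (∑ s : TrtSeq p t, w s • (Gmat j s * Bmat t)))

/-- `c_{dij} = tr Ĉ_{dij} = n ∑_s p_s c_{sij}`. -/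
def cD {p t : ℕ} (n : ℕ) (S : Matrix (Fin p) (Fin p) ℝ) (w : TrtSeq p t → ℝ)
    (i j : Fin 2) : ℝ :=
  (ChatD n S w i j).trace

/-- Fisher information matrix `C_{d,τ0,λ0}` for the direct treatment effects under the
proportional model. -/
def CInfo {p t : ℕ} (n : ℕ) (S : Matrix (Fin p) (Fin p) ℝ) (w : TrtSeq p t → ℝ)
    (τ0 : Fin t → ℝ) (l0 : ℝ) : Matrix (Fin t) (Fin t) ℝ :=
  CD n S w 0 0 + l0 • (CD n S w 0 1 + CD n S w 1 0) + (l0 ^ 2) • CD n S w 1 1 -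
    (τ0 ⬝ᵥ (CD n S w 1 1 *ᵥ τ0))⁻¹ •
      ((CD n S w 0 1 + l0 • CD n S w 1 1) * vecMulVec τ0 τ0 *
        (CD n S w 1 0 + l0 • CD n S w 1 1))

/-- Permutation matrix `S_σ` with `(S_σ)_{j,i} = 1` iff `i = σ j`. -/
def Smat {t : ℕ} (σ : Equiv.Perm (Fin t)) : Matrix (Fin t) (Fin t) ℝ :=
  Matrix.of fun j i => if i = σ j then 1 else 0

/-- The relabelled sequence `σ ∘ s`. -/
def permSeq {p t : ℕ} (σ : Equiv.Perm (Fin t)) (s : TrtSeq p t) : TrtSeq p t := fun k => σ (s k)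

/-- The design `σ d`, with weights `(σd)_s = p_{σ⁻¹ ∘ s}`. -/
def permDesign {p t : ℕ} (σ : Equiv.Perm (Fin t)) (w : TrtSeq p t → ℝ) : TrtSeq p t → ℝ :=
  fun s => w (permSeq σ⁻¹ s)

/-- A design is symmetric if its weights are invariant under treatment relabelling. -/
def IsSymmetricDesign {p t : ℕ} (w : TrtSeq p t → ℝ) : Prop :=
  ∀ (σ : Equiv.Perm (Fin t)) (s : TrtSeq p t), w (permSeq σ s) = w s

/-- The symmetrized design `d*` with weights `p*_s = (1/t!) ∑_σ p_{σ⁻¹ ∘ s}`. -/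
def symmetrize {p t : ℕ} (w : TrtSeq p t → ℝ) : TrtSeq p t → ℝ :=
  fun s => ((Nat.factorial t : ℝ))⁻¹ * ∑ σ : Equiv.Perm (Fin t), permDesign σ w s

/-- `q_s(x) = c_{s11} + 2 c_{s12} x + c_{s22} x²`. -/
def qSeq {p t : ℕ} (S : Matrix (Fin p) (Fin p) ℝ) (s : TrtSeq p t) (x : ℝ) : ℝ :=
  cseq S s 0 0 + 2 * cseq S s 0 1 * x + cseq S s 1 1 * x ^ 2

/-- `q(x) = max_{s ∈ S} q_s(x)`. -/
def qMax (p t : ℕ) (S : Matrix (Fin p) (Fin p) ℝ) (x : ℝ) : ℝ :=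
  sSup (Set.range fun s : TrtSeq p t => qSeq S s x)

/-- `y* = inf_x q(x)`. -/
def yStar (p t : ℕ) (S : Matrix (Fin p) (Fin p) ℝ) : ℝ := ⨅ x : ℝ, qMax p t S x

/-- `q_d(x) = ∑_s p_s q_s(x)`. -/
def qD {p t : ℕ} (S : Matrix (Fin p) (Fin p) ℝ) (w : TrtSeq p t → ℝ) (x : ℝ) : ℝ :=
  ∑ s : TrtSeq p t, w s * qSeq S s x

/-- `x_d = -c_{d12}/c_{d22}`. -/
def xD {p t : ℕ} (n : ℕ) (S : Matrix (Fin p) (Fin p) ℝ) (w : TrtSeq p t → ℝ) : ℝ :=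
  -(cD n S w 0 1) / cD n S w 1 1

/-- An exchangeable prior: a probability measure on `{τ : 1'τ = 0, τ ≠ 0}` that is
invariant under all coordinate permutations of `ℝ^t`. -/
def IsExchangeablePrior {t : ℕ} (g : Measure (Fin t → ℝ)) : Prop :=
  IsProbabilityMeasure g ∧
    g {τ : Fin t → ℝ | ¬((∑ i, τ i) = 0 ∧ τ ≠ 0)} = 0 ∧
    ∀ σ : Equiv.Perm (Fin t), Measure.map (fun τ i => τ (σ i)) g = g

/-- `m_d(τ0) = min {ℓ' C_{d,τ0,λ0} ℓ : 1'ℓ = 0, ℓ'ℓ = 1}`. -/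
def mD {p t : ℕ} (n : ℕ) (S : Matrix (Fin p) (Fin p) ℝ) (w : TrtSeq p t → ℝ) (l0 : ℝ)
    (τ0 : Fin t → ℝ) : ℝ :=
  sInf {v : ℝ | ∃ l : Fin t → ℝ, (∑ i, l i) = 0 ∧ l ⬝ᵥ l = 1 ∧
    v = l ⬝ᵥ (CInfo n S w τ0 l0 *ᵥ l)}

/-- The E-criterion value `E_{g,λ0}(d) = ∫ m_d(τ0) g(dτ0)`. -/
def Ecrit {p t : ℕ} (n : ℕ) (S : Matrix (Fin p) (Fin p) ℝ) (g : Measure (Fin t → ℝ))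
    (l0 : ℝ) (w : TrtSeq p t → ℝ) : ℝ :=
  ∫ τ0, mD n S w l0 τ0 ∂g

/-- Competing designs for E-optimality: designs with a.e. positive `τ0' C_{d22} τ0`
and `g`-integrable `m_d`. -/
def EAdmissible {p t : ℕ} (n : ℕ) (S : Matrix (Fin p) (Fin p) ℝ) (g : Measure (Fin t → ℝ))
    (l0 : ℝ) (w : TrtSeq p t → ℝ) : Prop :=
  IsDesign w ∧ (∀ᵐ τ0 ∂g, 0 < τ0 ⬝ᵥ (CD n S w 1 1 *ᵥ τ0)) ∧
    Integrable (mD n S w l0) g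

/-- `d` is `E_{g,λ0}`-optimal. -/
def EOptimal {p t : ℕ} (n : ℕ) (S : Matrix (Fin p) (Fin p) ℝ) (g : Measure (Fin t → ℝ))
    (l0 : ℝ) (w : TrtSeq p t → ℝ) : Prop :=
  ∀ w' : TrtSeq p t → ℝ, EAdmissible n S g l0 w' → Ecrit n S g l0 w' ≤ Ecrit n S g l0 w

/-- A pseudo symmetric design: treatments equireplicated in each period,
and all `C_{dij}` completely symmetric. -/
def IsPseudoSymmetric {p t : ℕ} (n : ℕ) (S : Matrix (Fin p) (Fin p) ℝ)
    (w : TrtSeq p t → ℝ) : Prop :=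
  (∀ (k : Fin p) (i : Fin t),
    (∑ s ∈ Finset.univ.filter fun s : TrtSeq p t => s k = i, w s) = 1 / (t : ℝ)) ∧
  ∀ i j : Fin 2, ∃ a b : ℝ, CD n S w i j = a • (1 : Matrix (Fin t) (Fin t) ℝ) + b • Jmat t

/-- Eigenvalues of a (Hermitian) matrix sorted increasingly with multiplicity. -/
def sortedEigs {t : ℕ} (C : Matrix (Fin t) (Fin t) ℝ) : Fin t → ℝ :=
  if h : C.IsHermitian then (fun i => h.eigenvalues (Tuple.sort h.eigenvalues i))
  else fun _ => 0

/-- `Φ_D(C) = (∏_{i=1}^{t-1} a_i)^{1/(t-1)}` (eigenvalues sorted increasingly). -/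
def PhiD {t : ℕ} (C : Matrix (Fin t) (Fin t) ℝ) : ℝ :=
  (∏ i ∈ Finset.univ.filter fun i : Fin t => (i : ℕ) ≠ 0, sortedEigs C i) ^ (((t : ℝ) - 1)⁻¹)

/-- `Φ_A(C) = (t-1)(∑_{i=1}^{t-1} a_i⁻¹)⁻¹` if `a_1 > 0`, else `0`. -/
def PhiA {t : ℕ} (C : Matrix (Fin t) (Fin t) ℝ) : ℝ :=
  if ∀ i : Fin t, (i : ℕ) ≠ 0 → 0 < sortedEigs C i then
    ((t : ℝ) - 1) *
      (∑ i ∈ Finset.univ.filter fun i : Fin t => (i : ℕ) ≠ 0, (sortedEigs C i)⁻¹)⁻¹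
  else 0

/-- `Φ_T(C) = tr(C)/(t-1)`. -/
def PhiT {t : ℕ} (C : Matrix (Fin t) (Fin t) ℝ) : ℝ := C.trace / ((t : ℝ) - 1)

/-- The criterion value `∫ Φ(C_{d,τ0,λ0}) g(dτ0)`. -/
def PhiCrit {p t : ℕ} (n : ℕ) (S : Matrix (Fin p) (Fin p) ℝ)
    (Phi : Matrix (Fin t) (Fin t) ℝ → ℝ) (g : Measure (Fin t → ℝ)) (l0 : ℝ)
    (w : TrtSeq p t → ℝ) : ℝ :=
  ∫ τ0, Phi (CInfo n S w τ0 l0) ∂g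

/-- Competing designs for a `Φ`-criterion. -/
def PhiAdmissible {p t : ℕ} (n : ℕ) (S : Matrix (Fin p) (Fin p) ℝ)
    (Phi : Matrix (Fin t) (Fin t) ℝ → ℝ) (g : Measure (Fin t → ℝ)) (l0 : ℝ)
    (w : TrtSeq p t → ℝ) : Prop :=
  IsDesign w ∧ (∀ᵐ τ0 ∂g, 0 < τ0 ⬝ᵥ (CD n S w 1 1 *ᵥ τ0)) ∧
    Integrable (fun τ0 => Phi (CInfo n S w τ0 l0)) g

/-- `d` is `Φ_{g,λ0}`-optimal. -/
def PhiOptimal {p t : ℕ} (n : ℕ) (S : Matrix (Fin p) (Fin p) ℝ)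
    (Phi : Matrix (Fin t) (Fin t) ℝ → ℝ) (g : Measure (Fin t → ℝ)) (l0 : ℝ)
    (w : TrtSeq p t → ℝ) : Prop :=
  ∀ w' : TrtSeq p t → ℝ, PhiAdmissible n S Phi g l0 w' →
    PhiCrit n S Phi g l0 w' ≤ PhiCrit n S Phi g l0 w

/-- `H_1(s) = F_s`, `H_2(s) = T_s + λ0 F_s` (for estimating `λ`). -/
def Hmat {p t : ℕ} (l0 : ℝ) (i : Fin 2) (s : TrtSeq p t) : Matrix (Fin p) (Fin t) ℝ :=
  if i = 0 then Fmat s else Tmat s + l0 • Fmat s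

/-- `Â_{sij} = B_t H_i(s)' B̃ H_j(s) B_t`. -/
def Ahat {p t : ℕ} (S : Matrix (Fin p) (Fin p) ℝ) (l0 : ℝ) (s : TrtSeq p t) (i j : Fin 2) :
    Matrix (Fin t) (Fin t) ℝ :=
  Bmat t * (Hmat l0 i s)ᵀ * Btil S * Hmat l0 j s * Bmat t

/-- `h_{sij} = tr Â_{sij}`. -/
def hseq {p t : ℕ} (S : Matrix (Fin p) (Fin p) ℝ) (l0 : ℝ) (s : TrtSeq p t) (i j : Fin 2) : ℝ :=
  (Ahat S l0 s i j).trace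

/-- `Â_{dij} = n ∑_s p_s Â_{sij}`. -/
def AhatD {p t : ℕ} (n : ℕ) (S : Matrix (Fin p) (Fin p) ℝ) (l0 : ℝ) (w : TrtSeq p t → ℝ)
    (i j : Fin 2) : Matrix (Fin t) (Fin t) ℝ :=
  (n : ℝ) • ∑ s : TrtSeq p t, w s • Ahat S l0 s i j

/-- `A_{dij} = Â_{dij} - n (∑_s p_s H_i(s) B_t)' B̃ (∑_s p_s H_j(s) B_t)`. -/
def AD {p t : ℕ} (n : ℕ) (S : Matrix (Fin p) (Fin p) ℝ) (l0 : ℝ) (w : TrtSeq p t → ℝ)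
    (i j : Fin 2) : Matrix (Fin t) (Fin t) ℝ :=
  AhatD n S l0 w i j -
    (n : ℝ) • ((∑ s : TrtSeq p t, w s • (Hmat l0 i s * Bmat t))ᵀ * Btil S *
      (∑ s : TrtSeq p t, w s • (Hmat l0 j s * Bmat t)))

/-- `G` is a generalized inverse of `A`. -/
def IsGInv {t : ℕ} (A G : Matrix (Fin t) (Fin t) ℝ) : Prop := A * G * A = A

/-- `A_d(G) = A_{d11} - A_{d12} G A_{d21}` with `A_{d21} = A_{d12}'`. -/
def ADfun {p t : ℕ} (n : ℕ) (S : Matrix (Fin p) (Fin p) ℝ) (l0 : ℝ) (w : TrtSeq p t → ℝ)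
    (G : Matrix (Fin t) (Fin t) ℝ) : Matrix (Fin t) (Fin t) ℝ :=
  AD n S l0 w 0 0 - AD n S l0 w 0 1 * G * (AD n S l0 w 0 1)ᵀ

/-- `r_s(x) = h_{s11} + 2 h_{s12} x + h_{s22} x²`. -/
def rSeq {p t : ℕ} (S : Matrix (Fin p) (Fin p) ℝ) (l0 : ℝ) (s : TrtSeq p t) (x : ℝ) : ℝ :=
  hseq S l0 s 0 0 + 2 * hseq S l0 s 0 1 * x + hseq S l0 s 1 1 * x ^ 2

/-- `r(x) = max_s r_s(x)`. -/
def rMax (p t : ℕ) (S : Matrix (Fin p) (Fin p) ℝ) (l0 : ℝ) (x : ℝ) : ℝ :=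
  sSup (Set.range fun s : TrtSeq p t => rSeq S l0 s x)

/-- `y_0 = inf_x r(x)`. -/
def yZero (p t : ℕ) (S : Matrix (Fin p) (Fin p) ℝ) (l0 : ℝ) : ℝ := ⨅ x : ℝ, rMax p t S l0 x

lemma Bmat_transpose (t : ℕ) : (Bmat t)ᵀ = Bmat t := by
  ext i j
  simp [Bmat, Jmat, Matrix.one_apply, eq_comm]

lemma Bmat_row_sum (t : ℕ) (ht : 3 ≤ t) (i : Fin t) : ∑ j, Bmat t i j = 0 := by
  have : (t : ℝ) ≠ 0 := by positivity
  simp [Bmat, Jmat, Matrix.one_apply, Finset.sum_sub_distrib, this]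

lemma Btil_transpose {p : ℕ} (S : Matrix (Fin p) (Fin p) ℝ) (hS : S.PosDef) :
    (Btil S)ᵀ = Btil S := by
  have h : (S⁻¹)ᵀ = S⁻¹ := by
    have := hS.isHermitian.inv
    simpa [Matrix.IsHermitian, Matrix.conjTranspose_eq_transpose_of_trivial] using this
  have hJ : (Jmat p)ᵀ = Jmat p := by ext i j; simp [Jmat]
  simp [Btil, Matrix.transpose_mul, h, hJ, Matrix.mul_assoc]

lemma quad_Jmat {p : ℕ} (u v : Fin p → ℝ) :
    u ⬝ᵥ (Jmat p *ᵥ v) = (u ⬝ᵥ (fun _ => (1 : ℝ))) * ((fun _ => (1 : ℝ)) ⬝ᵥ v) := by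
  simp [dotProduct, Matrix.mulVec, Jmat, Finset.sum_mul]

lemma Btil_psd {p : ℕ} (S : Matrix (Fin p) (Fin p) ℝ) (hS : S.PosDef) :
    (Btil S).PosSemidef := by
  have hA : (S⁻¹).PosSemidef := hS.inv.posSemidef
  have hT : (S⁻¹)ᵀ = S⁻¹ := by
    have := hA.isHermitian
    simpa [Matrix.IsHermitian, Matrix.conjTranspose_eq_transpose_of_trivial] using this
  refine Matrix.PosSemidef.of_dotProduct_mulVec_nonneg ?_ ?_
  · simpa [Matrix.IsHermitian, Matrix.conjTranspose_eq_transpose_of_trivial] using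
      Btil_transpose S hS
  · intro x
    simp only [star_trivial]
    set e : Fin p → ℝ := fun _ => (1 : ℝ) with he
    set A := S⁻¹ with hAdef
    have hsym : ∀ u v : Fin p → ℝ, u ⬝ᵥ (A *ᵥ v) = v ⬝ᵥ (A *ᵥ u) := by
      intro u v
      rw [Matrix.dotProduct_mulVec, ← Matrix.mulVec_transpose, hT, dotProduct_comm]
    have key : ∀ c : ℝ, 0 ≤ x ⬝ᵥ (A *ᵥ x) - 2 * c * (e ⬝ᵥ (A *ᵥ x))
        + c ^ 2 * (e ⬝ᵥ (A *ᵥ e)) := by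
      intro c
      have := hA.dotProduct_mulVec_nonneg (x - c • e)
      simp only [star_trivial, Matrix.mulVec_sub, Matrix.mulVec_smul, dotProduct_sub,
        sub_dotProduct, dotProduct_smul, smul_dotProduct, smul_eq_mul] at this
      rw [hsym x e] at this
      linarith
    have hq : x ⬝ᵥ (Btil S *ᵥ x) = x ⬝ᵥ (A *ᵥ x) - (e ⬝ᵥ (A *ᵥ e))⁻¹ * (e ⬝ᵥ (A *ᵥ x)) ^ 2 := by
      have : x ⬝ᵥ ((A * Jmat p * A) *ᵥ x) = (e ⬝ᵥ (A *ᵥ x)) ^ 2 := by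
        rw [← Matrix.mulVec_mulVec, ← Matrix.mulVec_mulVec, hsym x, dotProduct_comm, quad_Jmat, pow_two, dotProduct_comm (A *ᵥ x)]
      simp only [Btil, Matrix.sub_mulVec, dotProduct_sub, Matrix.smul_mulVec, dotProduct_smul,
        smul_eq_mul]
      rw [this]
    rw [hq]
    rcases eq_or_ne (e ⬝ᵥ (A *ᵥ e)) 0 with h0 | h0
    · rw [h0]; simpa using key 0
    · have := key ((e ⬝ᵥ (A *ᵥ x)) / (e ⬝ᵥ (A *ᵥ e)))
      have h2 : x ⬝ᵥ (A *ᵥ x) - (e ⬝ᵥ (A *ᵥ e))⁻¹ * (e ⬝ᵥ (A *ᵥ x)) ^ 2 =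
        x ⬝ᵥ (A *ᵥ x) - 2 * ((e ⬝ᵥ (A *ᵥ x)) / (e ⬝ᵥ (A *ᵥ e))) * (e ⬝ᵥ (A *ᵥ x))
        + ((e ⬝ᵥ (A *ᵥ x)) / (e ⬝ᵥ (A *ᵥ e))) ^ 2 * (e ⬝ᵥ (A *ᵥ e)) := by
        field_simp; ring
      rw [h2]; exact this

/-- `R_i(s) = G_i(s) B_t`. -/
def Rm {p t : ℕ} (i : Fin 2) (s : TrtSeq p t) : Matrix (Fin p) (Fin t) ℝ := Gmat i s * Bmat t

/-- `V_i = ∑ w_s R_i(s)`. -/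
def Vm {p t : ℕ} (w : TrtSeq p t → ℝ) (i : Fin 2) : Matrix (Fin p) (Fin t) ℝ :=
  ∑ s : TrtSeq p t, w s • (Gmat i s * Bmat t)

lemma Chat_eq {p t : ℕ} (S : Matrix (Fin p) (Fin p) ℝ) (s : TrtSeq p t) (i j : Fin 2) :
    Chat S s i j = (Rm i s)ᵀ * Btil S * Rm j s := by
  simp [Chat, Rm, Matrix.transpose_mul, Bmat_transpose, Matrix.mul_assoc]

lemma Chat_transpose {p t : ℕ} (S : Matrix (Fin p) (Fin p) ℝ) (hS : S.PosDef)
    (s : TrtSeq p t) (i j : Fin 2) : (Chat S s i j)ᵀ = Chat S s j i := by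
  simp [Chat_eq, Matrix.transpose_mul, Btil_transpose S hS, Matrix.mul_assoc]

lemma CD_transpose {p t : ℕ} (n : ℕ) (S : Matrix (Fin p) (Fin p) ℝ) (hS : S.PosDef)
    (w : TrtSeq p t → ℝ) (i j : Fin 2) : (CD n S w i j)ᵀ = CD n S w j i := by
  simp [CD, ChatD, Matrix.transpose_sub, Matrix.transpose_smul, Matrix.transpose_sum,
    Chat_transpose S hS, Matrix.transpose_mul, Btil_transpose S hS, Matrix.mul_assoc]

lemma cseq_symm {p t : ℕ} (S : Matrix (Fin p) (Fin p) ℝ) (hS : S.PosDef)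
    (s : TrtSeq p t) (i j : Fin 2) : cseq S s i j = cseq S s j i := by
  rw [cseq, cseq, ← Chat_transpose S hS, Matrix.trace_transpose]

lemma mulB_one {m t : ℕ} (ht : 3 ≤ t) (X : Matrix (Fin m) (Fin t) ℝ) :
    (X * Bmat t) *ᵥ (fun _ => (1 : ℝ)) = 0 := by
  have : Bmat t *ᵥ (fun _ => (1 : ℝ)) = 0 := by
    ext i; simpa [Matrix.mulVec, dotProduct] using Bmat_row_sum t ht i
  rw [← Matrix.mulVec_mulVec, this, Matrix.mulVec_zero]

lemma CD_one {p t : ℕ} (ht : 3 ≤ t) (n : ℕ) (S : Matrix (Fin p) (Fin p) ℝ)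
    (w : TrtSeq p t → ℝ) (i j : Fin 2) : CD n S w i j *ᵥ (fun _ => (1 : ℝ)) = 0 := by
  have : CD n S w i j = ((n : ℝ) • (∑ s : TrtSeq p t, w s • (Bmat t * (Gmat i s)ᵀ * Btil S * Gmat j s)) -
      (n : ℝ) • ((∑ s : TrtSeq p t, w s • (Gmat i s * Bmat t))ᵀ * Btil S *
      (∑ s : TrtSeq p t, w s • Gmat j s))) * Bmat t := by
    simp only [CD, ChatD, Chat, Matrix.sub_mul, Matrix.smul_mul, Matrix.sum_mul, Matrix.mul_assoc]
  rw [this, mulB_one ht]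

lemma trace_CD {p t : ℕ} (n : ℕ) (S : Matrix (Fin p) (Fin p) ℝ)
    (w : TrtSeq p t → ℝ) (i j : Fin 2) :
    (CD n S w i j).trace = n * ∑ s, w s * cseq S s i j
      - n * ((Vm w i)ᵀ * Btil S * Vm w j).trace := by
  simp [CD, ChatD, Matrix.trace_sub, Matrix.trace_smul, Matrix.trace_sum, cseq, Vm]

lemma trace_psd {p t : ℕ} (S : Matrix (Fin p) (Fin p) ℝ) (hS : S.PosDef)
    (X : Matrix (Fin p) (Fin t) ℝ) : 0 ≤ (Xᵀ * Btil S * X).trace := by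
  have := ((Btil_psd S hS).conjTranspose_mul_mul_same X).trace_nonneg
  simpa [Matrix.conjTranspose_eq_transpose_of_trivial] using this

lemma trace_M_le {p t : ℕ} (n : ℕ) (S : Matrix (Fin p) (Fin p) ℝ) (hS : S.PosDef)
    (w : TrtSeq p t → ℝ) (x : ℝ) :
    (CD n S w 0 0).trace + 2 * x * (CD n S w 0 1).trace + x ^ 2 * (CD n S w 1 1).trace
      ≤ n * ∑ s, w s * qSeq S s x := by
  have h := trace_psd S hS (Vm w 0 + x • Vm w 1)
  have h10 : ((Vm w 1)ᵀ * Btil S * Vm w 0).trace = ((Vm w 0)ᵀ * Btil S * Vm w 1).trace := by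
    rw [← Matrix.trace_transpose]
    simp [Matrix.transpose_mul, Btil_transpose S hS, Matrix.mul_assoc]
  simp only [Matrix.transpose_add, Matrix.transpose_smul, Matrix.add_mul, Matrix.mul_add,
    Matrix.smul_mul, Matrix.mul_smul, Matrix.trace_add, Matrix.trace_smul, smul_eq_mul, h10] at h
  have hq : ∑ s, w s * qSeq S s x = (∑ s, w s * cseq S s 0 0) + 2 * x * (∑ s, w s * cseq S s 0 1)
      + x ^ 2 * ∑ s, w s * cseq S s 1 1 := by
    simp only [Finset.mul_sum, ← Finset.sum_add_distrib, qSeq]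
    exact Finset.sum_congr rfl fun s _ => by ring
  rw [trace_CD, trace_CD, trace_CD, hq]
  have hn : (0 : ℝ) ≤ n := Nat.cast_nonneg n
  nlinarith [mul_nonneg hn h]

lemma qSeq_le {p t : ℕ} (S : Matrix (Fin p) (Fin p) ℝ) (s : TrtSeq p t) (x : ℝ) :
    qSeq S s x ≤ qMax p t S x :=
  le_csSup (Set.finite_range _).bddAbove ⟨s, rfl⟩

lemma CInfo_quad {p t : ℕ} (n : ℕ) (S : Matrix (Fin p) (Fin p) ℝ) (hS : S.PosDef)
    (w : TrtSeq p t → ℝ) (τ : Fin t → ℝ) (l0 : ℝ) (l : Fin t → ℝ) :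
    l ⬝ᵥ (CInfo n S w τ l0 *ᵥ l) = l ⬝ᵥ (CD n S w 0 0 *ᵥ l) + 2 * l0 * (l ⬝ᵥ (CD n S w 0 1 *ᵥ l))
      + l0 ^ 2 * (l ⬝ᵥ (CD n S w 1 1 *ᵥ l)) - (τ ⬝ᵥ (CD n S w 1 1 *ᵥ τ))⁻¹ *
        (l ⬝ᵥ (CD n S w 0 1 *ᵥ τ) + l0 * (l ⬝ᵥ (CD n S w 1 1 *ᵥ τ))) ^ 2 := by
  have hsym : ∀ (i j : Fin 2) (u v : Fin t → ℝ),
      u ⬝ᵥ (CD n S w i j *ᵥ v) = v ⬝ᵥ (CD n S w j i *ᵥ u) := by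
    intro i j u v
    rw [Matrix.dotProduct_mulVec, ← Matrix.mulVec_transpose, CD_transpose n S hS, dotProduct_comm]
  have h3 : l ⬝ᵥ (((CD n S w 0 1 + l0 • CD n S w 1 1) * vecMulVec τ τ *
        (CD n S w 1 0 + l0 • CD n S w 1 1)) *ᵥ l) =
      (l ⬝ᵥ (CD n S w 0 1 *ᵥ τ) + l0 * (l ⬝ᵥ (CD n S w 1 1 *ᵥ τ))) ^ 2 := by
    rw [← Matrix.mulVec_mulVec, ← Matrix.mulVec_mulVec, Matrix.vecMulVec_mulVec]
    simp only [Matrix.add_mulVec, Matrix.smul_mulVec, Matrix.mulVec_smul, dotProduct_add,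
      dotProduct_smul, smul_eq_mul, hsym 1 0 τ l, hsym 1 1 τ l, op_smul_eq_smul]
    ring
  simp only [CInfo, Matrix.sub_mulVec, Matrix.add_mulVec, Matrix.smul_mulVec, dotProduct_sub,
    dotProduct_add, dotProduct_smul, smul_eq_mul]
  rw [h3, hsym 1 0 l l]
  ring

lemma quad_bddBelow {t : ℕ} (C : Matrix (Fin t) (Fin t) ℝ) :
    BddBelow {v : ℝ | ∃ l : Fin t → ℝ, (∑ i, l i) = 0 ∧ l ⬝ᵥ l = 1 ∧ v = l ⬝ᵥ (C *ᵥ l)} := by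
  refine ⟨-∑ i, ∑ j, |C i j|, ?_⟩
  rintro v ⟨l, -, hl, rfl⟩
  have hb : ∀ i, |l i| ≤ 1 := by
    intro i
    have : l i * l i ≤ 1 := by
      rw [← hl]
      exact Finset.single_le_sum (f := fun i => l i * l i) (fun j _ => mul_self_nonneg _)
        (Finset.mem_univ i)
    exact abs_le_one_iff_mul_self_le_one.mpr this
  have h : |l ⬝ᵥ (C *ᵥ l)| ≤ ∑ i, ∑ j, |C i j| := by
    simp only [dotProduct, Matrix.mulVec, Finset.mul_sum]
    refine (Finset.abs_sum_le_sum_abs _ _).trans (Finset.sum_le_sum fun i _ => ?_)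
    refine (Finset.abs_sum_le_sum_abs _ _).trans (Finset.sum_le_sum fun j _ => ?_)
    rw [abs_mul, abs_mul]
    have h1 : |C i j| * |l j| ≤ |C i j| := mul_le_of_le_one_right (abs_nonneg _) (hb j)
    calc |l i| * (|C i j| * |l j|) ≤ 1 * |C i j| := by
          apply mul_le_mul (hb i) h1 (by positivity) (by norm_num)
      _ = _ := one_mul _
  exact (abs_le.mp h).1

lemma tau_pos {t : ℕ} (τ : Fin t → ℝ) (h : τ ≠ 0) : 0 < τ ⬝ᵥ τ := by
  have h0 : 0 ≤ τ ⬝ᵥ τ := Finset.sum_nonneg fun i _ => mul_self_nonneg _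
  exact lt_of_le_of_ne h0 fun h' => h (dotProduct_self_eq_zero.mp h'.symm)

lemma scalar_ineq (a b c x l0 : ℝ) (hc : 0 < c) :
    a + 2 * l0 * b + l0 ^ 2 * c - c⁻¹ * (b + l0 * c) ^ 2 ≤ a + 2 * x * b + x ^ 2 * c := by
  have : a + 2 * x * b + x ^ 2 * c - (a + 2 * l0 * b + l0 ^ 2 * c - c⁻¹ * (b + l0 * c) ^ 2)
     = c⁻¹ * (b + x * c) ^ 2 := by field_simp; ring
  have h2 : 0 ≤ c⁻¹ * (b + x * c) ^ 2 := by positivity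
  linarith

lemma scalar_eq (a c x l0 d : ℝ) (hd : 0 < d) : a + 2 * l0 * (-(x * c)) + l0 ^ 2 * c
    - (c * d)⁻¹ * ((l0 - x) * c) ^ 2 * d = a - x ^ 2 * c := by
  rcases eq_or_ne c 0 with h | h
  · rw [h]; simp
  · field_simp; ring

lemma scalar_b (N A B x T b c : ℝ) (eb : b = N * A / T) (ec : c = N * B / T)
    (hd : A + x * B = 0) : b = -(x * c) := by
  have hA : A = -(x * B) := by linarith
  rw [eb, ec, hA]; ring

lemma mD_le {p t : ℕ} (n : ℕ) (S : Matrix (Fin p) (Fin p) ℝ) (hS : S.PosDef)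
    (w : TrtSeq p t → ℝ) (l0 x : ℝ) (τ : Fin t → ℝ) (h0 : ∑ i, τ i = 0) (hτ : τ ≠ 0)
    (hpos : 0 < τ ⬝ᵥ (CD n S w 1 1 *ᵥ τ)) :
    mD n S w l0 τ ≤ (τ ⬝ᵥ τ)⁻¹ * (τ ⬝ᵥ ((CD n S w 0 0 + (2 * x) • CD n S w 0 1
      + x ^ 2 • CD n S w 1 1) *ᵥ τ)) := by
  have hd := tau_pos τ hτ
  set r := (Real.sqrt (τ ⬝ᵥ τ))⁻¹ with hr
  have hr2 : r * r = (τ ⬝ᵥ τ)⁻¹ := by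
    rw [hr, ← mul_inv, Real.mul_self_sqrt hd.le]
  have hmem := csInf_le (quad_bddBelow (CInfo n S w τ l0))
    ⟨r • τ, by simp [← Finset.mul_sum, h0], by
      simp only [dotProduct_smul, smul_dotProduct, smul_eq_mul]
      rw [← mul_assoc, hr2, inv_mul_cancel₀ hd.ne'], rfl⟩
  refine le_trans hmem ?_
  simp only [Matrix.mulVec_smul, dotProduct_smul, smul_dotProduct, smul_eq_mul]
  rw [← mul_assoc, hr2]
  refine mul_le_mul_of_nonneg_left ?_ (inv_nonneg.mpr hd.le)
  rw [CInfo_quad n S hS]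
  simp only [Matrix.add_mulVec, Matrix.smul_mulVec, dotProduct_add, dotProduct_smul, smul_eq_mul]
  set a := τ ⬝ᵥ (CD n S w 0 0 *ᵥ τ)
  set b := τ ⬝ᵥ (CD n S w 0 1 *ᵥ τ)
  set c := τ ⬝ᵥ (CD n S w 1 1 *ᵥ τ)
  exact scalar_ineq a b c x l0 hpos

lemma mulVec_cs {t : ℕ} (a b : ℝ) (u v : Fin t → ℝ) (hu : ∑ i, u i = 0) :
    u ⬝ᵥ ((a • (1 : Matrix (Fin t) (Fin t) ℝ) + b • Jmat t) *ᵥ v) = a * (u ⬝ᵥ v) := by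
  have : u ⬝ᵥ (fun _ => (1 : ℝ)) = 0 := by simpa [dotProduct] using hu
  simp [Matrix.add_mulVec, Matrix.smul_mulVec, dotProduct_add, quad_Jmat, this]

lemma const_mulB {p t : ℕ} (ht : 3 ≤ t) (X : Matrix (Fin p) (Fin t) ℝ) (c : Fin p → ℝ)
    (h : ∀ k i, X k i = c k) : X * Bmat t = 0 := by
  ext k i
  have := Bmat_row_sum t ht i
  rw [← Bmat_transpose] at this
  simp only [Matrix.transpose_apply] at this
  simp [Matrix.mul_apply, h, ← Finset.mul_sum, this]

lemma Vm_zero {p t : ℕ} (ht : 3 ≤ t) (w : TrtSeq p t → ℝ)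
    (h : ∀ (k : Fin p) (i : Fin t),
    (∑ s ∈ Finset.univ.filter fun s : TrtSeq p t => s k = i, w s) = 1 / (t : ℝ)) (i : Fin 2) :
    Vm w i = 0 := by
  have e : Vm w i = (∑ s : TrtSeq p t, w s • Gmat i s) * Bmat t := by
    simp [Vm, Matrix.sum_mul]
  rw [e]
  by_cases hi : i = 0
  · refine const_mulB ht _ (fun _ => 1 / (t : ℝ)) fun k j => ?_
    rw [← h k j, Finset.sum_filter]
    simp [Matrix.sum_apply, Gmat, hi, Tmat]
  · refine const_mulB ht _ (fun k => if (k : ℕ) = 0 then 0 else 1 / (t : ℝ)) fun k j => ?_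
    by_cases hk : (k : ℕ) = 0
    · simp [Matrix.sum_apply, Gmat, hi, Fmat, hk]
    · rw [if_neg hk, ← h ⟨(k : ℕ) - 1, Nat.lt_of_le_of_lt (Nat.sub_le _ _) k.isLt⟩ j,
        Finset.sum_filter]
      simp [Matrix.sum_apply, Gmat, hi, Fmat, hk]

lemma mD_opt {p t n : ℕ} (ht : 3 ≤ t)
    (S : Matrix (Fin p) (Fin p) ℝ) (hS : S.PosDef) (x y : ℝ)
    (w : TrtSeq p t → ℝ) (hw : IsDesign w) (hps : IsPseudoSymmetric n S w)
    (hq : ∑ s, w s * qSeq S s x = y)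
    (hd : (∑ s, w s * cseq S s 0 1) + x * (∑ s, w s * cseq S s 1 1) = 0)
    (l0 : ℝ) (τ : Fin t → ℝ) (h0 : ∑ i, τ i = 0) (hτ : τ ≠ 0) :
    mD n S w l0 τ = n * y / ((t : ℝ) - 1) := by
  obtain ⟨hrep, hcs⟩ := hps
  have ht1 : (0 : ℝ) < (t : ℝ) - 1 := by
    have : (3 : ℝ) ≤ t := by exact_mod_cast ht
    linarith
  have hV := Vm_zero ht w hrep
  have htr : ∀ i j (a b : ℝ), CD n S w i j = a • (1 : Matrix (Fin t) (Fin t) ℝ) + b • Jmat t →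
      a = n * (∑ s, w s * cseq S s i j) / ((t : ℝ) - 1) := by
    intro i j a b h
    have e1 := trace_CD n S w i j
    rw [hV i, h] at e1
    have e2 := congrFun (CD_one ht n S w i j) ⟨0, by omega⟩
    rw [h] at e2
    simp [Matrix.trace, Jmat, Matrix.one_apply, Finset.sum_add_distrib] at e1
    simp [Matrix.mulVec, dotProduct, Jmat, Matrix.one_apply, Finset.sum_add_distrib] at e2
    rw [eq_div_iff ht1.ne']
    linarith
  obtain ⟨a, a', ha⟩ := hcs 0 0
  obtain ⟨b, b', hb⟩ := hcs 0 1
  obtain ⟨c, c', hc⟩ := hcs 1 1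
  have ea := htr _ _ _ _ ha
  have eb := htr _ _ _ _ hb
  have ec := htr _ _ _ _ hc
  have hc0 : 0 ≤ c := by
    rw [ec]
    have : 0 ≤ ∑ s, w s * cseq S s 1 1 := Finset.sum_nonneg fun s _ =>
      mul_nonneg (hw.1 s) (by rw [cseq, Chat_eq]; exact trace_psd S hS _)
    exact div_nonneg (mul_nonneg (Nat.cast_nonneg n) this) ht1.le
  have hbx : b = - (x * c) := by
    exact scalar_b _ _ _ _ _ _ _ eb ec hd
  have hy : n * y / ((t : ℝ) - 1) = a - x ^ 2 * c := by
    have hq' : ∑ s, w s * qSeq S s x = (∑ s, w s * cseq S s 0 0) + 2 * x * (∑ s, w s * cseq S s 0 1)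
        + x ^ 2 * ∑ s, w s * cseq S s 1 1 := by
      simp only [Finset.mul_sum, ← Finset.sum_add_distrib, qSeq]
      exact Finset.sum_congr rfl fun s _ => by ring
    have : n * y / ((t : ℝ) - 1) = a + 2 * x * b + x ^ 2 * c := by
      rw [ea, eb, ec, ← hq, hq']; ring
    rw [this, hbx]; ring
  have hdp := tau_pos τ hτ
  have hval : ∀ l : Fin t → ℝ, ∑ i, l i = 0 → l ⬝ᵥ l = 1 →
      l ⬝ᵥ (CInfo n S w τ l0 *ᵥ l) = a + 2 * l0 * b + l0 ^ 2 * c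
        - (c * (τ ⬝ᵥ τ))⁻¹ * ((l0 - x) * c) ^ 2 * (l ⬝ᵥ τ) ^ 2 := by
    intro l hl hl1
    rw [CInfo_quad n S hS, ha, hb, hc]
    simp only [mulVec_cs _ _ _ _ hl, mulVec_cs _ _ _ _ h0, hl1]
    rw [hbx]; ring
  have hone : a + 2 * l0 * b + l0 ^ 2 * c
        - (c * (τ ⬝ᵥ τ))⁻¹ * ((l0 - x) * c) ^ 2 * (τ ⬝ᵥ τ) = a - x ^ 2 * c := by
    rw [hbx]; exact scalar_eq _ _ _ _ _ hdp
  rw [hy, ← hone]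
  apply IsLeast.csInf_eq
  constructor
  · set r := (Real.sqrt (τ ⬝ᵥ τ))⁻¹ with hr
    have hr2 : r * r = (τ ⬝ᵥ τ)⁻¹ := by
      rw [hr, ← mul_inv, Real.mul_self_sqrt hdp.le]
    have k1 : ∑ i, (r • τ) i = 0 := by simp [← Finset.mul_sum, h0]
    have k2 : (r • τ) ⬝ᵥ (r • τ) = 1 := by
      simp only [dotProduct_smul, smul_dotProduct, smul_eq_mul]
      rw [← mul_assoc, hr2, inv_mul_cancel₀ hdp.ne']
    refine ⟨r • τ, k1, k2, ?_⟩
    rw [hval _ k1 k2]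
    have : ((r • τ) ⬝ᵥ τ) ^ 2 = τ ⬝ᵥ τ := by
      simp only [smul_dotProduct, smul_eq_mul]
      rw [mul_pow, pow_two r, hr2, pow_two, ← mul_assoc, inv_mul_cancel₀ hdp.ne', one_mul]
    rw [this]
  · rintro v ⟨l, hl, hl1, rfl⟩
    rw [hval l hl hl1]
    have hcs : (l ⬝ᵥ τ) ^ 2 ≤ τ ⬝ᵥ τ := by
      have := Finset.sum_mul_sq_le_sq_mul_sq Finset.univ l τ
      simp only [pow_two] at this hl1 ⊢
      simp only [dotProduct] at hl1 ⊢
      rw [hl1, one_mul] at this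
      exact this
    have : 0 ≤ (c * (τ ⬝ᵥ τ))⁻¹ * ((l0 - x) * c) ^ 2 :=
      mul_nonneg (inv_nonneg.mpr (mul_nonneg hc0 hdp.le)) (sq_nonneg _)
    have := mul_le_mul_of_nonneg_left hcs this
    linarith

lemma ratio_meas {t : ℕ} (i j : Fin t) :
    Measurable (fun τ : Fin t → ℝ => (τ ⬝ᵥ τ)⁻¹ * (τ i * τ j)) := by
  simp only [dotProduct]; fun_prop

lemma ratio_bound {t : ℕ} (i j : Fin t) (τ : Fin t → ℝ) :
    |(τ ⬝ᵥ τ)⁻¹ * (τ i * τ j)| ≤ 1 := by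
  have hs : ∀ k, τ k * τ k ≤ τ ⬝ᵥ τ := fun k =>
    Finset.single_le_sum (f := fun i => τ i * τ i) (fun j _ => mul_self_nonneg _)
        (Finset.mem_univ k)
  have h0 : 0 ≤ τ ⬝ᵥ τ := le_trans (mul_self_nonneg _) (hs i)
  rw [abs_mul, abs_inv, abs_of_nonneg h0]
  have : |τ i * τ j| ≤ τ ⬝ᵥ τ := by
    rw [abs_le]
    constructor <;> nlinarith [hs i, hs j, sq_nonneg (τ i - τ j), sq_nonneg (τ i + τ j)]
  exact inv_mul_le_one_of_le₀ this h0

lemma ratio_int {t : ℕ} (g : Measure (Fin t → ℝ)) [IsProbabilityMeasure g] (i j : Fin t) :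
    Integrable (fun τ : Fin t → ℝ => (τ ⬝ᵥ τ)⁻¹ * (τ i * τ j)) g :=
  Integrable.of_bound (ratio_meas i j).aestronglyMeasurable 1
    (Filter.Eventually.of_forall fun τ => ratio_bound i j τ)

lemma prior_moment {t : ℕ} (ht : 3 ≤ t) (g : Measure (Fin t → ℝ)) (hg : IsExchangeablePrior g)
    (i j : Fin t) : ∫ τ, (τ ⬝ᵥ τ)⁻¹ * (τ i * τ j) ∂g =
      if i = j then (t : ℝ)⁻¹ else - ((t : ℝ) * ((t : ℝ) - 1))⁻¹ := by
  obtain ⟨hpr, hsupp, hinv⟩ := hg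
  have hae : ∀ᵐ τ ∂g, (∑ i, τ i) = 0 ∧ τ ≠ 0 := hsupp
  set K : Fin t → Fin t → ℝ := fun i j => ∫ τ, (τ ⬝ᵥ τ)⁻¹ * (τ i * τ j) ∂g with hK
  have hperm : ∀ (σ : Equiv.Perm (Fin t)) i j, K (σ i) (σ j) = K i j := by
    intro σ i j
    have hm : Measurable (fun (τ : Fin t → ℝ) (i : Fin t) => τ (σ i)) := by fun_prop
    have : K i j = ∫ τ, (τ ⬝ᵥ τ)⁻¹ * (τ i * τ j) ∂(Measure.map (fun τ i => τ (σ i)) g) := by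
      rw [hinv σ]
    rw [this, integral_map hm.aemeasurable (ratio_meas i j).aestronglyMeasurable]
    refine integral_congr_ae (Filter.Eventually.of_forall fun τ => ?_)
    have : (fun i => τ (σ i)) ⬝ᵥ (fun i => τ (σ i)) = τ ⬝ᵥ τ :=
      Equiv.sum_comp σ (fun i => τ i * τ i)
    simp only [this]
  have ht0 : (t : ℝ) ≠ 0 := by positivity
  have ht1 : (0 : ℝ) < (t : ℝ) - 1 := by
    have : (3 : ℝ) ≤ t := by exact_mod_cast ht
    linarith
  have hdiag : ∀ i j, K i i = K j j := by
    intro i j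
    simpa using (hperm (Equiv.swap i j) i i).symm
  have hsum : ∑ i, K i i = 1 := by
    rw [hK]
    simp only
    rw [← integral_finsetSum _ fun i _ => ratio_int g i i]
    have : ∀ᵐ τ ∂g, ∑ i, (τ ⬝ᵥ τ)⁻¹ * (τ i * τ i) = 1 := by
      filter_upwards [hae] with τ hτ
      rw [← Finset.mul_sum]
      exact inv_mul_cancel₀ (tau_pos τ hτ.2).ne'
    rw [integral_congr_ae this]; simp
  have hKd : ∀ i, K i i = (t : ℝ)⁻¹ := by
    intro i
    have : ∑ j : Fin t, K j j = t * K i i := by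
      rw [Finset.sum_congr rfl fun j _ => hdiag j i]; simp
    rw [hsum] at this
    field_simp; linarith
  have hrow : ∀ i, ∑ j, K i j = 0 := by
    intro i
    rw [hK]
    simp only
    rw [← integral_finsetSum _ fun j _ => ratio_int g i j]
    have : ∀ᵐ τ ∂g, ∑ j, (τ ⬝ᵥ τ)⁻¹ * (τ i * τ j) = 0 := by
      filter_upwards [hae] with τ hτ
      rw [← Finset.mul_sum, ← Finset.mul_sum, hτ.1]; simp
    rw [integral_congr_ae this]; simp
  change K i j = _
  split_ifs with h
  · rw [← h]; exact hKd i
  · have hoff : ∀ k ∈ Finset.univ.erase i, K i k = K i j := by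
      intro k hk
      have hk : k ≠ i := by simpa using hk
      have := hperm (Equiv.swap j k) i j
      rw [Equiv.swap_apply_of_ne_of_ne h hk.symm, Equiv.swap_apply_left] at this
      exact this
    have h2 := hrow i
    rw [← Finset.add_sum_erase _ _ (Finset.mem_univ i), Finset.sum_congr rfl hoff, hKd i] at h2
    rw [Finset.sum_const, Finset.card_erase_of_mem (Finset.mem_univ i), Finset.card_univ,
      Fintype.card_fin, nsmul_eq_mul, Nat.cast_sub (by omega)] at h2
    push_cast at h2
    have h3 : K i j * ((t : ℝ) - 1) = - (t : ℝ)⁻¹ := by linarith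
    rw [mul_inv, ← neg_mul, ← h3]
    field_simp

lemma quad_integral {t : ℕ} (ht : 3 ≤ t) (g : Measure (Fin t → ℝ)) (hg : IsExchangeablePrior g)
    (M : Matrix (Fin t) (Fin t) ℝ) (hM : M *ᵥ (fun _ => (1 : ℝ)) = 0) :
    Integrable (fun τ => (τ ⬝ᵥ τ)⁻¹ * (τ ⬝ᵥ (M *ᵥ τ))) g ∧
    ∫ τ, (τ ⬝ᵥ τ)⁻¹ * (τ ⬝ᵥ (M *ᵥ τ)) ∂g = M.trace / ((t : ℝ) - 1) := by
  have := hg.1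
  have e : (fun τ : Fin t → ℝ => (τ ⬝ᵥ τ)⁻¹ * (τ ⬝ᵥ (M *ᵥ τ))) =
      fun τ => ∑ i, ∑ j, M i j * ((τ ⬝ᵥ τ)⁻¹ * (τ i * τ j)) := by
    funext τ
    conv_lhs => rw [dotProduct, dotProduct]
    simp only [Matrix.mulVec, dotProduct, Finset.mul_sum]
    refine Finset.sum_congr rfl fun i _ => Finset.sum_congr rfl fun j _ => ?_
    ring
  have hi : ∀ i j, Integrable (fun τ : Fin t → ℝ => M i j * ((τ ⬝ᵥ τ)⁻¹ * (τ i * τ j))) g :=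
    fun i j => (ratio_int g i j).const_mul _
  rw [e]
  refine ⟨integrable_finsetSum _ fun i _ => integrable_finsetSum _ fun j _ => hi i j, ?_⟩
  rw [integral_finsetSum _ fun i _ => integrable_finsetSum _ fun j _ => hi i j]
  have ht0 : (t : ℝ) ≠ 0 := by positivity
  have ht1 : (0 : ℝ) < (t : ℝ) - 1 := by
    have : (3 : ℝ) ≤ t := by exact_mod_cast ht
    linarith
  rw [Matrix.trace, Finset.sum_div]
  refine Finset.sum_congr rfl fun i _ => ?_
  rw [integral_finsetSum _ fun j _ => hi i j]
  simp only [integral_const_mul, prior_moment ht g hg]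
  have hr : ∑ j, M i j = 0 := by
    simpa [Matrix.mulVec, dotProduct] using congrFun hM i
  have : ∀ j, M i j * (if i = j then (t : ℝ)⁻¹ else - ((t : ℝ) * ((t : ℝ) - 1))⁻¹) =
      M i j * (- ((t : ℝ) * ((t : ℝ) - 1))⁻¹) + (if i = j then M i j * ((t : ℝ) - 1)⁻¹ else 0) := by
    intro j
    split_ifs
    · field_simp; ring
    · ring
  rw [Finset.sum_congr rfl fun j _ => this j, Finset.sum_add_distrib, ← Finset.sum_mul, hr]
  simp [div_eq_mul_inv]

/-- a pseudo symmetric design satisfying Kushner's scalar conditions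
is `E_{g,λ0}`-optimal for every `λ0` and exchangeable `g`. -/
theorem stmt11 (p t n : ℕ) (hp : 2 ≤ p) (ht : 3 ≤ t) (hn : 1 ≤ n)
    (S : Matrix (Fin p) (Fin p) ℝ) (hS : S.PosDef)
    (xstar : ℝ) (hxs : qMax p t S xstar = yStar p t S)
    (hxsu : ∀ x : ℝ, qMax p t S x = yStar p t S → x = xstar)
    (w : TrtSeq p t → ℝ) (hw : IsDesign w) (hps : IsPseudoSymmetric n S w)
    (h1 : ∑ s ∈ Finset.univ.filter (fun s : TrtSeq p t => qSeq S s xstar = yStar p t S),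
        w s * deriv (qSeq S s) xstar = 0)
    (h2 : ∑ s ∈ Finset.univ.filter (fun s : TrtSeq p t => qSeq S s xstar = yStar p t S),
        w s = 1)
    (h3 : ∀ s : TrtSeq p t, qSeq S s xstar ≠ yStar p t S → w s = 0) :
    ∀ (l0 : ℝ) (g : Measure (Fin t → ℝ)), IsExchangeablePrior g →
      EOptimal n S g l0 w := by
  intro l0 g hg w' hw'
  obtain ⟨hw'd, hpos, hint⟩ := hw'
  haveI := hg.1
  have ht1 : (0 : ℝ) < (t : ℝ) - 1 := by
    have : (3 : ℝ) ≤ t := by exact_mod_cast ht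
    linarith
  have hae : ∀ᵐ τ ∂g, (∑ i, τ i) = 0 ∧ τ ≠ 0 := hg.2.1
  have hq : ∑ s, w s * qSeq S s xstar = yStar p t S := by
    have : ∀ s, w s * qSeq S s xstar = w s * yStar p t S := by
      intro s
      by_cases h : qSeq S s xstar = yStar p t S
      · rw [h]
      · rw [h3 s h]; simp
    rw [Finset.sum_congr rfl fun s _ => this s, ← Finset.sum_mul, hw.2, one_mul]
  have hder : ∀ s : TrtSeq p t, deriv (qSeq S s) xstar =
      2 * cseq S s 0 1 + 2 * cseq S s 1 1 * xstar := by
    intro s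
    have h := (((hasDerivAt_id xstar).const_mul (2 * cseq S s 0 1)).const_add
      (cseq S s 0 0)).add (((hasDerivAt_id xstar).pow 2).const_mul (cseq S s 1 1))
    have h' : HasDerivAt (qSeq S s) (2 * cseq S s 0 1 + 2 * cseq S s 1 1 * xstar) xstar := by
      refine h.congr_deriv ?_
      simp; ring
    exact h'.deriv
  have hd : (∑ s, w s * cseq S s 0 1) + xstar * (∑ s, w s * cseq S s 1 1) = 0 := by
    rw [Finset.sum_filter_of_ne] at h1
    · simp only [hder] at h1
      have : ∑ s, w s * (2 * cseq S s 0 1 + 2 * cseq S s 1 1 * xstar) =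
        2 * ((∑ s, w s * cseq S s 0 1) + xstar * (∑ s, w s * cseq S s 1 1)) := by
        simp only [Finset.mul_sum, ← Finset.sum_add_distrib]
        exact Finset.sum_congr rfl fun s _ => by ring
      linarith
    · intro s _ hs
      by_contra h
      exact hs (by rw [h3 s h, zero_mul])
  have hE : Ecrit n S g l0 w = n * yStar p t S / ((t : ℝ) - 1) := by
    have : ∀ᵐ τ ∂g, mD n S w l0 τ = n * yStar p t S / ((t : ℝ) - 1) := by
      filter_upwards [hae] with τ hτ
      exact mD_opt ht S hS xstar _ w hw hps hq hd l0 τ hτ.1 hτ.2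
    rw [Ecrit, integral_congr_ae this]; simp
  rw [hE]
  set M := CD n S w' 0 0 + (2 * xstar) • CD n S w' 0 1 + xstar ^ 2 • CD n S w' 1 1 with hMdef
  have hM : M *ᵥ (fun _ => (1 : ℝ)) = 0 := by
    simp [hMdef, Matrix.add_mulVec, Matrix.smul_mulVec, CD_one ht]
  obtain ⟨hi, hI⟩ := quad_integral ht g hg M hM
  have hle : Ecrit n S g l0 w' ≤ M.trace / ((t : ℝ) - 1) := by
    rw [← hI]
    refine integral_mono_ae hint hi ?_
    filter_upwards [hae, hpos] with τ hτ hp'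
    exact mD_le n S hS w' l0 xstar τ hτ.1 hτ.2 hp'
  refine hle.trans ?_
  refine div_le_div_of_nonneg_right ?_ ht1.le
  have htr := trace_M_le n S hS w' xstar
  have hMt : M.trace = (CD n S w' 0 0).trace + 2 * xstar * (CD n S w' 0 1).trace
      + xstar ^ 2 * (CD n S w' 1 1).trace := by
    simp [hMdef, Matrix.trace_add, Matrix.trace_smul]
  rw [hMt]
  refine htr.trans (mul_le_mul_of_nonneg_left ?_ (Nat.cast_nonneg n))
  calc ∑ s, w' s * qSeq S s xstar ≤ ∑ s, w' s * yStar p t S :=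
        Finset.sum_le_sum fun s _ => mul_le_mul_of_nonneg_left
          (hxs ▸ qSeq_le S s xstar) (hw'd.1 s)
    _ = yStar p t S := by rw [← Finset.sum_mul, hw'd.2, one_mul]
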